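/- arXiv:2412.12003 — 2 statements merged into one kernel-verified Lean document; each statement's English description precedes it below -/
import Mathlib

section
/- (Weak Kodaira decomposition) Let (H_•, P_•) be a Hilbert complex of length n. Then for each 0 ≤ k ≤ n, the Hilbert space H_k is the orthogonal direct sum H_k = Ĥ^k ⊕ closure(ran(P_{k−1})) ⊕ closure(ran(P_k*)), where Ĥ^k := ker(P_k) ∩ ker(P*_{k−1}) is the harmonic space in degree k: the three subspaces are pairwise orthogonal, each is closed, and their sum is all of H_k. -/
open LinearMap Submodule

noncomputable section

variable {H : ℕ → Type}
  [∀ k, NormedAddCommGroup (H k)] [∀ k, InnerProductSpace ℂ (H k)]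
  [∀ k, CompleteSpace (H k)]

/-- The kernel of a partially defined operator, as a submodule of the ambient space. -/
def pker {E F : Type} [NormedAddCommGroup E] [InnerProductSpace ℂ E]
    [NormedAddCommGroup F] [InnerProductSpace ℂ F] (T : E →ₗ.[ℂ] F) : Submodule ℂ E :=
  (LinearMap.ker T.toFun).map T.domain.subtype

/-- The range of a partially defined operator. -/
def pran {E F : Type} [NormedAddCommGroup E] [InnerProductSpace ℂ E]
    [NormedAddCommGroup F] [InnerProductSpace ℂ F] (T : E →ₗ.[ℂ] F) : Submodule ℂ F :=
  LinearMap.range T.toFun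

/-- `ran(P_{k−1})`, with the convention `P_{−1} = 0`. -/
def prevRange (P : ∀ k, H k →ₗ.[ℂ] H (k + 1)) : ∀ k, Submodule ℂ (H k)
  | 0 => ⊥
  | (k + 1) => pran (P k)

/-- `ker(P*_{k−1})`, with the convention `P_{−1} = 0` (so that it is everything in degree 0). -/
def prevKerAdj (P : ∀ k, H k →ₗ.[ℂ] H (k + 1)) : ∀ k, Submodule ℂ (H k)
  | 0 => ⊤
  | (k + 1) => pker ((P k).adjoint)

/-- The harmonic space `Ĥ^k = ker(P_k) ∩ ker(P*_{k−1})`. -/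
abbrev harmonicSp (P : ∀ k, H k →ₗ.[ℂ] H (k + 1)) (k : ℕ) : Submodule ℂ (H k) :=
  pker (P k) ⊓ prevKerAdj P k

/-!
For a densely defined closed operator `T` between Hilbert spaces, the graph of `T†` is the
orthogonal complement of the graph of `T`, up to a rotation of the factors. Taking adjoints of
graphs twice gives back the closure, which yields `ker T† = (ran T)ᗮ` and `ker T = (ran T†)ᗮ`.
With `A = ran P_{k-1}` and `B = ran P_k†`, the complex property says that `A ≤ ker P_k = Bᗮ`,
and the harmonic space is `Aᗮ ⊓ Bᗮ`. Thus `closure A` splits off from `H_k`, and `closure B`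
splits off from the remaining summand `Aᗮ`.
-/

section OrthogonalSubspaces

variable {𝕜 E : Type*} [RCLike 𝕜] [NormedAddCommGroup E] [InnerProductSpace 𝕜 E]
  {A B : Submodule 𝕜 E}

lemma isOrtho_topologicalClosure_right_iff : A.IsOrtho B.topologicalClosure ↔ A.IsOrtho B := by
  rw [isOrtho_iff_le, orthogonal_closure, isOrtho_iff_le]

lemma isOrtho_topologicalClosure_left_iff : A.topologicalClosure.IsOrtho B ↔ A.IsOrtho B := by
  rw [isOrtho_comm, isOrtho_topologicalClosure_right_iff, isOrtho_comm]

lemma topologicalClosure_sup_orthogonal_inf [CompleteSpace E] (h : A ≤ B)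
    (hB : IsClosed (B : Set E)) :
    A.topologicalClosure ⊔ Aᗮ ⊓ B = B := by
  have : CompleteSpace A.topologicalClosure := A.isClosed_topologicalClosure.completeSpace_coe
  rw [← A.orthogonal_closure]
  exact sup_orthogonal_inf_of_hasOrthogonalProjection (A.topologicalClosure_minimal h hB)

lemma orthogonal_inf_sup_topologicalClosure_eq_top [CompleteSpace E] (h : A.IsOrtho B) :
    Bᗮ ⊓ Aᗮ ⊔ A.topologicalClosure ⊔ B.topologicalClosure = ⊤ :=
  calc Bᗮ ⊓ Aᗮ ⊔ A.topologicalClosure ⊔ B.topologicalClosure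
    _ = A.topologicalClosure ⊔ (B.topologicalClosure ⊔ Bᗮ ⊓ Aᗮ) := by ac_rfl
    _ = A.topologicalClosure ⊔ Aᗮ ⊓ ⊤ := by
      rw [topologicalClosure_sup_orthogonal_inf h.symm.le A.isClosed_orthogonal, inf_top_eq]
    _ = ⊤ := topologicalClosure_sup_orthogonal_inf le_top isClosed_univ

end OrthogonalSubspaces

section AmbientKer

variable {R E F : Type*} [Ring R] [AddCommGroup E] [Module R E] [AddCommGroup F] [Module R F]

/-- The kernel of a partially defined linear map, as a submodule of the space containing its
domain. This is `pker` over an arbitrary ring and in arbitrary universes. -/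
def ambientKer (T : E →ₗ.[R] F) : Submodule R E :=
  T.toFun.ker.map T.domain.subtype

lemma ambientKer_eq_comap_graph (T : E →ₗ.[R] F) :
    ambientKer T = T.graph.comap (inl R E F) := by
  ext x
  simp [ambientKer, LinearPMap.mem_graph_iff]

end AmbientKer

section Adjoint

open scoped LinearPMap

variable {𝕜 E F : Type*} [RCLike 𝕜] [NormedAddCommGroup E] [InnerProductSpace 𝕜 E]
  [NormedAddCommGroup F] [InnerProductSpace 𝕜 F]

lemma comap_inl_adjoint (g : Submodule 𝕜 (E × F)) :
    g.adjoint.comap (inl 𝕜 F E) = (g.map (snd 𝕜 E F))ᗮ := by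
  ext y
  simp only [mem_comap, inl_apply, mem_adjoint_iff, inner_zero_right, sub_zero, mem_orthogonal,
    mem_map, Prod.exists, snd_apply, exists_eq_right, forall_exists_index]
  exact forall_comm

lemma mem_adjoint_iff_toLp_mem_orthogonal (g : Submodule 𝕜 (E × F)) (a : F) (b : E) :
    (a, b) ∈ g.adjoint ↔
      WithLp.toLp 2 (b, -a) ∈ (g.comap (WithLp.linearEquiv 2 𝕜 (E × F)).toLinearMap)ᗮ := by
  simp only [mem_adjoint_iff, mem_orthogonal, mem_comap, WithLp.prod_inner_apply, inner_neg_right]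
  constructor
  · intro h u hu
    rw [← sub_eq_add_neg, ← neg_sub, neg_eq_zero]
    exact h u.fst u.snd hu
  · intro h c d hcd
    rw [← neg_eq_zero, neg_sub, sub_eq_add_neg]
    exact h (WithLp.toLp 2 (c, d)) hcd

lemma mem_adjoint_adjoint_iff (g : Submodule 𝕜 (E × F)) (p : E × F) :
    p ∈ g.adjoint.adjoint ↔
      WithLp.toLp 2 p ∈ (g.comap (WithLp.linearEquiv 2 𝕜 (E × F)).toLinearMap)ᗮᗮ := by
  rw [mem_adjoint_iff, mem_orthogonal]
  simp only [mem_adjoint_iff_toLp_mem_orthogonal, WithLp.prod_inner_apply]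
  constructor
  · intro h u hu
    simpa using h (-u.snd) u.fst (by rwa [neg_neg])
  · intro h a b hab
    simpa [sub_eq_add_neg] using h _ hab

lemma adjoint_adjoint_eq_topologicalClosure [CompleteSpace E] [CompleteSpace F]
    (g : Submodule 𝕜 (E × F)) : g.adjoint.adjoint = g.topologicalClosure := by
  ext p
  rw [mem_adjoint_adjoint_iff, orthogonal_orthogonal_eq_closure]
  exact Set.ext_iff.mp ((WithLp.prodContinuousLinearEquiv 2 𝕜 E F).toHomeomorph.preimage_closure
    (g : Set (E × F))).symm (WithLp.toLp 2 p)

variable [CompleteSpace E] {T : E →ₗ.[𝕜] F}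

lemma ambientKer_adjoint (hT : Dense (T.domain : Set E)) :
    ambientKer T† = T.toFun.rangeᗮ := by
  rw [ambientKer_eq_comap_graph, LinearPMap.adjoint_graph_eq_graph_adjoint hT, comap_inl_adjoint,
    LinearPMap.graph_map_snd_eq_range]

lemma ambientKer_eq_orthogonal_range_adjoint [CompleteSpace F] (hT : Dense (T.domain : Set E))
    (hclosed : T.IsClosed) : ambientKer T = T†.toFun.rangeᗮ := by
  rw [ambientKer_eq_comap_graph, ← hclosed.submodule_topologicalClosure_eq,
    ← adjoint_adjoint_eq_topologicalClosure, comap_inl_adjoint,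
    ← LinearPMap.adjoint_graph_eq_graph_adjoint hT, LinearPMap.graph_map_snd_eq_range]

/-- In degree `k` of a Hilbert complex, `T = P_k`, `A = ran P_{k-1}` and `Aᗮ = ker P_{k-1}†`. -/
theorem weak_kodaira_decomposition_general [CompleteSpace F] (hT : Dense (T.domain : Set E))
    (hclosed : T.IsClosed) {A : Submodule 𝕜 E} (hA : A ≤ ambientKer T) :
    (ambientKer T ⊓ Aᗮ).IsOrtho A.topologicalClosure ∧
    (ambientKer T ⊓ Aᗮ).IsOrtho T†.toFun.range.topologicalClosure ∧
    A.topologicalClosure.IsOrtho T†.toFun.range.topologicalClosure ∧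
    IsClosed ((ambientKer T ⊓ Aᗮ : Submodule 𝕜 E) : Set E) ∧
    IsClosed (A.topologicalClosure : Set E) ∧
    IsClosed (T†.toFun.range.topologicalClosure : Set E) ∧
    ambientKer T ⊓ Aᗮ ⊔ A.topologicalClosure ⊔ T†.toFun.range.topologicalClosure = ⊤ := by
  rw [ambientKer_eq_orthogonal_range_adjoint hT hclosed] at hA ⊢
  simp only [isOrtho_topologicalClosure_left_iff, isOrtho_topologicalClosure_right_iff]
  exact ⟨inf_le_right, inf_le_left, hA,
    (isClosed_orthogonal _).inter (isClosed_orthogonal _),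
    isClosed_topologicalClosure _, isClosed_topologicalClosure _,
    orthogonal_inf_sup_topologicalClosure_eq_top hA⟩

end Adjoint

lemma prevKerAdj_eq_orthogonal_prevRange {P : ∀ k, H k →ₗ.[ℂ] H (k + 1)}
    (hdense : ∀ k, Dense ((P k).domain : Set (H k))) :
    ∀ k, prevKerAdj P k = (prevRange P k)ᗮ
  | 0 => bot_orthogonal_eq_top.symm
  | k + 1 => ambientKer_adjoint (hdense k)

lemma prevRange_le_pker {K : ℕ → Type} [∀ k, NormedAddCommGroup (K k)]
    [∀ k, InnerProductSpace ℂ (K k)] {P : ∀ k, K k →ₗ.[ℂ] K (k + 1)}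
    (hsub : ∀ k, ∀ x : (P k).domain, P k x ∈ (P (k + 1)).domain)
    (hcomp : ∀ k, ∀ x : (P k).domain, P (k + 1) ⟨P k x, hsub k x⟩ = 0) :
    ∀ k, prevRange P k ≤ pker (P k)
  | 0 => bot_le
  | k + 1 => by
    rintro _ ⟨x, rfl⟩
    exact ⟨⟨P k x, hsub k x⟩, hcomp k x, rfl⟩

/-- Weak Kodaira decomposition: for a Hilbert complex `(H, P)` of length `n`
(densely defined closed differentials with `P_{k+1} ∘ P_k = 0`), in every degree `k ≤ n` the
Hilbert space `H_k` decomposes as the orthogonal direct sum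
`H_k = Ĥ^k ⊕ closure(ran P_{k−1}) ⊕ closure(ran P_k*)`:
the three subspaces are pairwise orthogonal, closed, and their sum is all of `H_k`. -/
theorem weak_kodaira_decomposition
    (n : ℕ) (P : ∀ k, H k →ₗ.[ℂ] H (k + 1))
    (hdense : ∀ k, Dense ((P k).domain : Set (H k)))
    (hclosed : ∀ k, (P k).IsClosed)
    (hsub : ∀ k, ∀ x : (P k).domain, ((P k) x) ∈ (P (k + 1)).domain)
    (hcomp : ∀ k, ∀ x : (P k).domain, P (k + 1) ⟨P k x, hsub k x⟩ = 0)
    (htop : ∀ k, n ≤ k → P k = 0) :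
    ∀ k ≤ n,
      (harmonicSp P k).IsOrtho ((prevRange P k).topologicalClosure) ∧
      (harmonicSp P k).IsOrtho ((pran ((P k).adjoint)).topologicalClosure) ∧
      ((prevRange P k).topologicalClosure).IsOrtho
        ((pran ((P k).adjoint)).topologicalClosure) ∧
      IsClosed ((harmonicSp P k : Set (H k))) ∧
      IsClosed (((prevRange P k).topologicalClosure : Set (H k))) ∧
      IsClosed (((pran ((P k).adjoint)).topologicalClosure : Set (H k))) ∧
      harmonicSp P k ⊔ (prevRange P k).topologicalClosure ⊔
          (pran ((P k).adjoint)).topologicalClosure = ⊤ := by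
  intro k _
  rw [harmonicSp, prevKerAdj_eq_orthogonal_prevRange hdense]
  exact weak_kodaira_decomposition_general (hdense k) (hclosed k) (prevRange_le_pker hsub hcomp k)
end
end

section
/- Let (H_•, P_•) be a Hilbert complex of length n, and for 0 ≤ k ≤ n let Δ_k be the Laplace-type operator P*_k P_k + P_{k−1} P*_{k−1} with domain dom(Δ_k) = { v ∈ dom(P_k) ∩ dom(P*_{k−1}) : P_k v ∈ dom(P*_k) and P*_{k−1} v ∈ dom(P_{k−1}) }. Then the complex is Fredholm (i.e. the cohomology H^k := ker(P_k)/ran(P_{k−1}) is finite dimensional for every k) if and only if, for every k, Δ_k is a Fredholm operator, i.e. ker(Δ_k) is finite dimensional and ran(Δ_k) is closed and of finite codimension in H_k. -/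
/-!
Everything happens at a single node `E₀ —Q→ E₁ —P→ E₂`, with `Δ = P* P + Q Q*`.

If `ran Δ` has finite codimension, then so has `ker P ∩ ran Δ` in `ker P`, and
`ker P ∩ ran Δ ⊆ ran Q`: the summand `P* P x` of a cocycle `P* P x + Q Q* x` lies in
`ker P ∩ (ker P)ᗮ = 0`.

Conversely, finite dimensional cohomology makes all the ranges closed, by the open mapping theorem.
The closed range theorem then solves `P* P v = b` with `v ∈ (ker P)ᗮ ⊆ ker Q*` for `b ∈ (ker P)ᗮ`,
and `Q Q* w = c` with `w ∈ ran Q ⊆ ker P` for `c ∈ ran Q`. Hence `ran Δ` contains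
`(ker P)ᗮ ⊕ ran Q = (ker P ∩ (ran Q)ᗮ)ᗮ`. The harmonic space `ker P ∩ (ran Q)ᗮ` embeds into the
cohomology, and it contains `ker Δ` because `⟪x, Δ x⟫ = ‖P x‖² + ‖Q* x‖²`.
-/

open LinearMap Submodule

noncomputable section

variable {H : ℕ → Type}
  [∀ k, NormedAddCommGroup (H k)] [∀ k, InnerProductSpace ℂ (H k)]
  [∀ k, CompleteSpace (H k)]

section NodeLaplacian

variable {E₀ E₁ E₂ : Type}
  [NormedAddCommGroup E₀] [InnerProductSpace ℂ E₀] [CompleteSpace E₀]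
  [NormedAddCommGroup E₁] [InnerProductSpace ℂ E₁] [CompleteSpace E₁]
  [NormedAddCommGroup E₂] [InnerProductSpace ℂ E₂] [CompleteSpace E₂]

/-- The domain of the Laplace-type operator `Δ = P* P + Q Q*` at the node `E₁` of
`E₀ —Q→ E₁ —P→ E₂`:
`dom(Δ) = { v ∈ dom(P) ∩ dom(Q*) : P v ∈ dom(P*), Q* v ∈ dom(Q) }`. -/
abbrev lapDomain (Q : E₀ →ₗ.[ℂ] E₁) (P : E₁ →ₗ.[ℂ] E₂) : Submodule ℂ E₁ :=
  ((P.adjoint.domain.comap P.toFun).map P.domain.subtype) ⊓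
    ((Q.domain.comap Q.adjoint.toFun).map Q.adjoint.domain.subtype)

/-- The Laplace-type operator `Δ = P* P + Q Q*` at the node `E₁` of `E₀ —Q→ E₁ —P→ E₂`,
as a partially defined operator with the domain `lapDomain Q P`. -/
noncomputable def nodeLap (Q : E₀ →ₗ.[ℂ] E₁) (P : E₁ →ₗ.[ℂ] E₂) : E₁ →ₗ.[ℂ] E₁ where
  domain := lapDomain Q P
  toFun :=
    P.adjoint.toFun ∘ₗ
        (LinearMap.codRestrict P.adjoint.domain
          (P.toFun ∘ₗ (P.adjoint.domain.comap P.toFun).subtype)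
          (fun z => Submodule.mem_comap.mp z.2)) ∘ₗ
        (Submodule.equivSubtypeMap P.domain (P.adjoint.domain.comap P.toFun)).symm.toLinearMap ∘ₗ
        Submodule.inclusion inf_le_left
      + Q.toFun ∘ₗ
        (LinearMap.codRestrict Q.domain
          (Q.adjoint.toFun ∘ₗ (Q.domain.comap Q.adjoint.toFun).subtype)
          (fun z => Submodule.mem_comap.mp z.2)) ∘ₗ
        (Submodule.equivSubtypeMap Q.adjoint.domain
          (Q.domain.comap Q.adjoint.toFun)).symm.toLinearMap ∘ₗ
        Submodule.inclusion inf_le_right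

end NodeLaplacian

/-- The Laplace-type operator `Δ_k = P*_k P_k + P_{k−1} P*_{k−1}` of the Hilbert complex
`(H, P)` (with the convention `P_{−1} = 0`). -/
noncomputable def lapAt (P : ∀ k, H k →ₗ.[ℂ] H (k + 1)) : ∀ k, H k →ₗ.[ℂ] H k
  | 0 => nodeLap (0 : H 0 →ₗ.[ℂ] H 0) (P 0)
  | (k + 1) => nodeLap (P k) (P (k + 1))

section LinearAlgebra

variable {R M : Type*} [Ring R] [IsNoetherianRing R] [AddCommGroup M] [Module R M]
  {K L N : Submodule R M}

theorem cofg_comap_subtype_of_inf_le (hN : N.CoFG) (hle : K ⊓ N ≤ L) :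
    (L.comap K.subtype).CoFG := by
  have hker : LinearMap.ker (N.mkQ ∘ₗ K.subtype) = N.comap K.subtype := by
    rw [LinearMap.ker_comp, ker_mkQ]
  refine CoFG.of_le ?_ (hker ▸ CoFG.ker (N.mkQ ∘ₗ K.subtype))
  exact fun x hx => hle ⟨x.2, hx⟩

theorem fg_inf_of_disjoint_of_cofg_comap (hLN : Disjoint L N) (hL : (L.comap K.subtype).CoFG) :
    (K ⊓ N).FG := by
  have hdisj : Disjoint (N.comap K.subtype) (L.comap K.subtype) :=
    disjoint_def.2 fun x hxN hxL => Subtype.ext (disjoint_def.1 hLN x hxL hxN)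
  rw [← map_comap_subtype]
  exact (hL.fg_of_disjoint hdisj).map K.subtype

end LinearAlgebra

section Banach

variable {𝕜 E F : Type*} [NontriviallyNormedField 𝕜]
  [NormedAddCommGroup E] [NormedSpace 𝕜 E] [CompleteSpace E]
  [NormedAddCommGroup F] [NormedSpace 𝕜 F] [CompleteSpace F]

-- `f.coprod G.subtypeL` is a quotient map, under which `range f` pulls back to `E × {0}`.
theorem isClosed_range_of_isCompl (f : E →L[𝕜] F) {G : Submodule 𝕜 F} (h : IsCompl f.range G)
    (hG : IsClosed (G : Set F)) : IsClosed (f.range : Set F) := by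
  have : CompleteSpace G := hG.completeSpace_coe
  have hsurj : Function.Surjective (f.coprod G.subtypeL) := by
    rw [← ContinuousLinearMap.coe_coe, ← LinearMap.range_eq_top]
    simp [LinearMap.range_coprod, h.sup_eq_top]
  have hpre : f.coprod G.subtypeL ⁻¹' (f.range : Set F) = Set.univ ×ˢ {0} := by
    ext ⟨x, g⟩
    have hg : (g : F) ∈ f.range ↔ g = 0 :=
      ⟨fun hg => Subtype.ext (disjoint_def.1 h.disjoint g hg g.2), by rintro rfl; simp⟩
    have hfx : f x ∈ f.range := ⟨x, rfl⟩
    simpa [(f.range).add_mem_iff_right hfx] using hg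
  rw [← ((f.coprod G.subtypeL).isQuotientMap hsurj).isClosed_preimage, hpre]
  exact isClosed_univ.prod isClosed_singleton

theorem isClosed_range_of_cofg_comap [CompleteSpace 𝕜] (f : E →L[𝕜] F) {K : Submodule 𝕜 F}
    (hK : IsClosed (K : Set F)) (hfK : f.range ≤ K) (hfin : (f.range.comap K.subtype).CoFG) :
    IsClosed (f.range : Set F) := by
  have : CompleteSpace K := hK.completeSpace_coe
  let g : E →L[𝕜] K := f.codRestrict K fun x => hfK ⟨x, rfl⟩
  have hg : g.range = f.range.comap K.subtype := LinearMap.range_codRestrict _ _ _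
  obtain ⟨G, hG⟩ := Submodule.exists_isCompl g.range
  have : FiniteDimensional 𝕜 G := .of_fg ((hg ▸ hfin).fg_of_isCompl hG)
  have hclosed := isClosed_range_of_isCompl g hG G.closed_of_finiteDimensional
  have himage : Subtype.val '' (g.range : Set K) = (f.range : Set F) := by
    rw [← K.coe_subtype, ← map_coe, hg, map_comap_subtype, inf_eq_right.2 hfK]
  exact himage ▸ hK.isClosedEmbedding_subtypeVal.isClosedMap _ hclosed

theorem exists_comp_eq_of_ker_le {G : Type*} [NormedAddCommGroup G] [NormedSpace 𝕜 G]
    (f : E →L[𝕜] F) (hf : Function.Surjective f) (φ : E →L[𝕜] G) (hφ : f.ker ≤ φ.ker) :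
    ∃ ψ : F →L[𝕜] G, ψ ∘L f = φ := by
  obtain ⟨s, hs⟩ := (f : E →ₗ[𝕜] F).exists_rightInverse_of_surjective
    (LinearMap.range_eq_top.2 hf)
  have hcomp : ∀ x, φ (s (f x)) = φ x := fun x => by
    have hx : s (f x) - x ∈ f.ker := by
      simpa [sub_eq_zero] using LinearMap.congr_fun hs (f x)
    simpa [sub_eq_zero] using hφ hx
  have hcont : Continuous ((φ : E →ₗ[𝕜] G) ∘ₗ s) :=
    (f.isQuotientMap hf).continuous_iff.2 (φ.continuous.congr fun x => (hcomp x).symm)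
  exact ⟨⟨(φ : E →ₗ[𝕜] G) ∘ₗ s, hcont⟩, ContinuousLinearMap.ext hcomp⟩

end Banach

section Hilbert

variable {𝕜 E F : Type*} [RCLike 𝕜] [NormedAddCommGroup F] [InnerProductSpace 𝕜 F]

theorem exists_mem_range_inner_eq [CompleteSpace F] [NormedAddCommGroup E] [NormedSpace 𝕜 E]
    [CompleteSpace E] (f : E →L[𝕜] F) (hf : IsClosed (f.range : Set F)) (φ : E →L[𝕜] 𝕜)
    (hφ : f.ker ≤ φ.ker) : ∃ z ∈ f.range, ∀ x, inner 𝕜 z (f x) = φ x := by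
  have : CompleteSpace f.range := hf.completeSpace_coe
  obtain ⟨ψ, hψ⟩ := exists_comp_eq_of_ker_le f.rangeRestrict
    (LinearMap.surjective_rangeRestrict _) φ (f.ker_rangeRestrict.trans_le hφ)
  refine ⟨_, ((InnerProductSpace.toDual 𝕜 f.range).symm ψ).2, fun x => ?_⟩
  calc inner 𝕜 ((InnerProductSpace.toDual 𝕜 f.range).symm ψ : F) (f x)
      = inner 𝕜 ((InnerProductSpace.toDual 𝕜 f.range).symm ψ) (f.rangeRestrict x) := rfl
    _ = ψ (f.rangeRestrict x) := InnerProductSpace.toDual_symm_apply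
    _ = φ x := congr($hψ x)

theorem orthogonal_inf_orthogonal_of_le {K L : Submodule 𝕜 F} [K.HasOrthogonalProjection]
    [L.HasOrthogonalProjection] (h : L ≤ K) : (K ⊓ Lᗮ)ᗮ = Kᗮ ⊔ L := by
  have hL : L ≤ (K ⊓ Lᗮ)ᗮ := L.le_orthogonal_orthogonal.trans (orthogonal_le inf_le_right)
  have hle : Kᗮ ⊔ L ≤ (K ⊓ Lᗮ)ᗮ := sup_le (orthogonal_le inf_le_left) hL
  have hsup : K ⊓ Lᗮ ⊔ (Kᗮ ⊔ L) = ⊤ := by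
    rw [sup_comm Kᗮ, ← sup_assoc, sup_comm _ L, inf_comm,
      sup_orthogonal_inf_of_hasOrthogonalProjection h, sup_orthogonal_of_hasOrthogonalProjection]
  symm
  apply eq_of_le_of_inf_le_of_le_sup (z := K ⊓ Lᗮ) hle
  · rw [inf_comm, inf_orthogonal_eq_bot]
    exact bot_le
  · rw [sup_comm, hsup]
    exact le_top

end Hilbert

section Graph

variable {E F : Type} [NormedAddCommGroup E] [InnerProductSpace ℂ E]
  [NormedAddCommGroup F] [InnerProductSpace ℂ F]

theorem mem_pran_iff (T : E →ₗ.[ℂ] F) (y : F) : y ∈ pran T ↔ ∃ x, (x, y) ∈ T.graph :=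
  T.mem_range_iff

theorem mem_pran_of_mem_graph {T : E →ₗ.[ℂ] F} {x : E} {y : F} (h : (x, y) ∈ T.graph) :
    y ∈ pran T :=
  (mem_pran_iff T y).2 ⟨x, h⟩

theorem mem_pker_iff (T : E →ₗ.[ℂ] F) (x : E) : x ∈ pker T ↔ (x, (0 : F)) ∈ T.graph := by
  simp only [pker, mem_map, LinearMap.mem_ker, LinearPMap.mem_graph_iff, coe_subtype]
  exact exists_congr fun _ => and_comm

theorem isClosed_pker {T : E →ₗ.[ℂ] F} (hT : T.IsClosed) : IsClosed (pker T : Set E) := by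
  have hpre : (pker T : Set E) = (fun x : E => (x, (0 : F))) ⁻¹' T.graph :=
    Set.ext fun x => mem_pker_iff T x
  rw [hpre]
  exact IsClosed.preimage (by fun_prop) hT

theorem pran_le_pker_of_comp_eq_zero {G : Type} [NormedAddCommGroup G] [InnerProductSpace ℂ G]
    {S : E →ₗ.[ℂ] F} {T : F →ₗ.[ℂ] G} (hsub : ∀ x : S.domain, S x ∈ T.domain)
    (hcomp : ∀ x : S.domain, T ⟨S x, hsub x⟩ = 0) : pran S ≤ pker T := by
  rintro _ ⟨x, rfl⟩
  exact ⟨⟨S x, hsub x⟩, hcomp x, rfl⟩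

theorem pran_zero : pran (0 : E →ₗ.[ℂ] F) = ⊥ :=
  LinearMap.range_zero

theorem isClosed_linearPMap_zero : (0 : E →ₗ.[ℂ] F).IsClosed := by
  have hgraph : ((0 : E →ₗ.[ℂ] F).graph : Set (E × F)) = Set.univ ×ˢ {0} := by
    ext ⟨x, y⟩
    simp [eq_comm]
  rw [LinearPMap.IsClosed, hgraph]
  exact isClosed_univ.prod isClosed_singleton

/-- The projection `(x, T x) ↦ T x` from the graph of `T`: a bounded operator with the same range
as `T`, which makes theorems on bounded operators applicable to ranges of closed ones. -/
def graphSnd (T : E →ₗ.[ℂ] F) : T.graph →L[ℂ] F :=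
  ContinuousLinearMap.snd ℂ E F ∘L T.graph.subtypeL

theorem range_graphSnd (T : E →ₗ.[ℂ] F) : (graphSnd T).range = pran T := by
  ext y
  rw [mem_pran_iff]
  exact ⟨fun ⟨z, hz⟩ => ⟨z.1.1, hz ▸ z.2⟩, fun ⟨x, hx⟩ => ⟨⟨(x, y), hx⟩, rfl⟩⟩

theorem isClosed_pran_of_cofg_comap [CompleteSpace E] [CompleteSpace F] {T : E →ₗ.[ℂ] F}
    (hT : T.IsClosed) {K : Submodule ℂ F} (hK : IsClosed (K : Set F)) (hTK : pran T ≤ K)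
    (hfin : ((pran T).comap K.subtype).CoFG) : IsClosed (pran T : Set F) := by
  have : CompleteSpace T.graph := _root_.IsClosed.completeSpace_coe (hs := hT)
  rw [← range_graphSnd] at hTK hfin ⊢
  exact isClosed_range_of_cofg_comap (graphSnd T) hK hTK hfin

variable [CompleteSpace E]

theorem exists_mem_graph_mem_orthogonal_pker {T : E →ₗ.[ℂ] F} (hT : T.IsClosed) {y : F}
    (hy : y ∈ pran T) : ∃ x ∈ (pker T)ᗮ, (x, y) ∈ T.graph := by
  have : CompleteSpace (pker T) := (isClosed_pker hT).completeSpace_coe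
  obtain ⟨x, hx⟩ := (mem_pran_iff T y).1 hy
  refine ⟨x - (pker T).starProjection x, sub_starProjection_mem_orthogonal x, ?_⟩
  have hproj := (mem_pker_iff T _).1 ((pker T).starProjection_apply_mem x)
  simpa using T.graph.sub_mem hx hproj

theorem mem_graph_adjoint_iff {T : E →ₗ.[ℂ] F} (hT : Dense (T.domain : Set E)) (z : F) (w : E) :
    (z, w) ∈ T.adjoint.graph ↔ ∀ x y, (x, y) ∈ T.graph → inner ℂ y z = inner ℂ x w := by
  simp only [LinearPMap.adjoint_graph_eq_graph_adjoint hT, mem_adjoint_iff, sub_eq_zero]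

theorem pker_adjoint {T : E →ₗ.[ℂ] F} (hT : Dense (T.domain : Set E)) :
    pker T.adjoint = (pran T)ᗮ := by
  ext z
  simp only [mem_pker_iff, mem_graph_adjoint_iff hT, mem_orthogonal, mem_pran_iff,
    inner_zero_right, forall_exists_index]
  exact forall_comm

theorem pran_adjoint_le {T : E →ₗ.[ℂ] F} (hT : Dense (T.domain : Set E)) :
    pran T.adjoint ≤ (pker T)ᗮ := by
  intro w hw x hx
  obtain ⟨z, hz⟩ := (mem_pran_iff _ w).1 hw
  rw [← (mem_graph_adjoint_iff hT z w).1 hz x 0 ((mem_pker_iff T x).1 hx), inner_zero_left]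

variable [CompleteSpace F]

/- The functional `(x, T x) ↦ ⟪b, x⟫` on the graph of `T` vanishes where `T x = 0`, so it factors
through the open map `graphSnd T` onto `ran T`; `z` is its Riesz representative. -/
theorem exists_mem_pran_mem_graph_adjoint {T : E →ₗ.[ℂ] F} (hd : Dense (T.domain : Set E))
    (hT : T.IsClosed) (hran : IsClosed (pran T : Set F)) {b : E} (hb : b ∈ (pker T)ᗮ) :
    ∃ z ∈ pran T, (z, b) ∈ T.adjoint.graph := by
  have : CompleteSpace T.graph := _root_.IsClosed.completeSpace_coe (hs := hT)
  let φ : T.graph →L[ℂ] ℂ := innerSL ℂ b ∘L ContinuousLinearMap.fst ℂ E F ∘L T.graph.subtypeL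
  have hφ : (graphSnd T).ker ≤ φ.ker := by
    rintro ⟨⟨x, y⟩, hxy⟩ (rfl : y = 0)
    exact inner_left_of_mem_orthogonal ((mem_pker_iff T x).2 hxy) hb
  rw [← range_graphSnd] at hran ⊢
  obtain ⟨z, hz, hinner⟩ := exists_mem_range_inner_eq (graphSnd T) hran φ hφ
  refine ⟨z, hz, (mem_graph_adjoint_iff hd z b).2 fun x y hxy => ?_⟩
  have hzy : inner ℂ z y = inner ℂ b x := hinner ⟨(x, y), hxy⟩
  rw [← inner_conj_symm, hzy, inner_conj_symm]

theorem exists_adjoint_comp_self_eq {T : E →ₗ.[ℂ] F} (hd : Dense (T.domain : Set E))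
    (hT : T.IsClosed) (hran : IsClosed (pran T : Set F)) {b : E} (hb : b ∈ (pker T)ᗮ) :
    ∃ v ∈ (pker T)ᗮ, ∃ p, (v, p) ∈ T.graph ∧ (p, b) ∈ T.adjoint.graph := by
  obtain ⟨p, hp, hpb⟩ := exists_mem_pran_mem_graph_adjoint hd hT hran hb
  obtain ⟨v, hv, hvp⟩ := exists_mem_graph_mem_orthogonal_pker hT hp
  exact ⟨v, hv, p, hvp, hpb⟩

theorem exists_self_comp_adjoint_eq {T : E →ₗ.[ℂ] F} (hd : Dense (T.domain : Set E))
    (hT : T.IsClosed) (hran : IsClosed (pran T : Set F)) {c : F} (hc : c ∈ pran T) :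
    ∃ w ∈ pran T, ∃ u, (w, u) ∈ T.adjoint.graph ∧ (u, c) ∈ T.graph := by
  obtain ⟨u, hu, huc⟩ := exists_mem_graph_mem_orthogonal_pker hT hc
  obtain ⟨w, hw, hwu⟩ := exists_mem_pran_mem_graph_adjoint hd hT hran hu
  exact ⟨w, hw, u, hwu, huc⟩

end Graph

/-- Fredholm operators among the partially defined operators of a Hilbert space. -/
def IsFredholmOperator {E : Type} [NormedAddCommGroup E] [InnerProductSpace ℂ E]
    (T : E →ₗ.[ℂ] E) : Prop :=
  FiniteDimensional ℂ (pker T) ∧ IsClosed (pran T : Set E) ∧ FiniteDimensional ℂ (E ⧸ pran T)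

section Node

variable {E₀ E₁ E₂ : Type}
  [NormedAddCommGroup E₀] [InnerProductSpace ℂ E₀] [CompleteSpace E₀]
  [NormedAddCommGroup E₁] [InnerProductSpace ℂ E₁] [CompleteSpace E₁]
  [NormedAddCommGroup E₂] [InnerProductSpace ℂ E₂]
  {Q : E₀ →ₗ.[ℂ] E₁} {P : E₁ →ₗ.[ℂ] E₂}

-- Graph membership avoids the proofs of membership in domains that `nodeLap` carries around.
theorem mem_graph_nodeLap_iff (Q : E₀ →ₗ.[ℂ] E₁) (P : E₁ →ₗ.[ℂ] E₂) (x y : E₁) :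
    (x, y) ∈ (nodeLap Q P).graph ↔ ∃ p a q b, (x, p) ∈ P.graph ∧ (p, a) ∈ P.adjoint.graph ∧
      (x, q) ∈ Q.adjoint.graph ∧ (q, b) ∈ Q.graph ∧ a + b = y := by
  simp only [LinearPMap.mem_graph_iff]
  constructor
  · rintro ⟨⟨_, hdom⟩, rfl, rfl⟩
    obtain ⟨⟨⟨x, hx⟩, hp, rfl⟩, ⟨⟨x', hx'⟩, hq, hxx⟩⟩ := id hdom
    obtain rfl : x' = x := hxx
    exact ⟨_, _, _, _, ⟨⟨_, hx⟩, rfl, rfl⟩, ⟨⟨_, hp⟩, rfl, rfl⟩, ⟨⟨_, hx'⟩, rfl, rfl⟩,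
      ⟨⟨_, hq⟩, rfl, rfl⟩, rfl⟩
  · rintro ⟨_, _, _, _, ⟨⟨x, hx⟩, rfl, rfl⟩, ⟨⟨_, hp⟩, rfl, rfl⟩, ⟨⟨x', hx'⟩, hxx, rfl⟩,
      ⟨⟨_, hq⟩, rfl, rfl⟩, rfl⟩
    obtain rfl : x' = x := hxx
    exact ⟨⟨_, ⟨⟨_, hx⟩, hp, rfl⟩, ⟨⟨_, hx'⟩, hq, rfl⟩⟩, rfl, rfl⟩

theorem pker_inf_pran_nodeLap_le (hPd : Dense (P.domain : Set E₁)) (hQP : pran Q ≤ pker P) :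
    pker P ⊓ pran (nodeLap Q P) ≤ pran Q := by
  rintro y ⟨hyker, hyran⟩
  obtain ⟨x, hx⟩ := (mem_pran_iff _ y).1 hyran
  obtain ⟨p, a, q, b, -, hpa, -, hqb, rfl⟩ := (mem_graph_nodeLap_iff Q P x y).1 hx
  have hb : b ∈ pran Q := mem_pran_of_mem_graph hqb
  have ha_ker : a ∈ pker P := ((pker P).add_mem_iff_left (hQP hb)).1 hyker
  have ha_orth : a ∈ (pker P)ᗮ := pran_adjoint_le hPd (mem_pran_of_mem_graph hpa)
  have ha : a = 0 := disjoint_def.1 (pker P).orthogonal_disjoint a ha_ker ha_orth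
  rwa [ha, zero_add]

theorem cofg_cohomology_of_cofg_pran_nodeLap (hPd : Dense (P.domain : Set E₁))
    (hQP : pran Q ≤ pker P) (hfin : (pran (nodeLap Q P)).CoFG) :
    ((pran Q).comap (pker P).subtype).CoFG :=
  cofg_comap_subtype_of_inf_le hfin (pker_inf_pran_nodeLap_le hPd hQP)

theorem exists_inner_nodeLap_eq (hPd : Dense (P.domain : Set E₁))
    (hQd : Dense (Q.domain : Set E₀)) {x y : E₁} (hxy : (x, y) ∈ (nodeLap Q P).graph) :
    ∃ p q, (x, p) ∈ P.graph ∧ (x, q) ∈ Q.adjoint.graph ∧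
      inner ℂ x y = ((‖p‖ ^ 2 + ‖q‖ ^ 2 : ℝ) : ℂ) := by
  obtain ⟨p, a, q, b, hxp, hpa, hxq, hqb, rfl⟩ := (mem_graph_nodeLap_iff Q P x y).1 hxy
  refine ⟨p, q, hxp, hxq, ?_⟩
  have hxa : inner ℂ x a = inner ℂ p p := ((mem_graph_adjoint_iff hPd p a).1 hpa x p hxp).symm
  have hbx : inner ℂ b x = inner ℂ q q := (mem_graph_adjoint_iff hQd x q).1 hxq q b hqb
  have hxb : inner ℂ x b = inner ℂ q q := by rw [← inner_conj_symm, hbx, inner_conj_symm]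
  rw [inner_add_right, hxa, hxb, inner_self_eq_norm_sq_to_K, inner_self_eq_norm_sq_to_K]
  norm_cast

theorem pker_nodeLap_le (hPd : Dense (P.domain : Set E₁)) (hQd : Dense (Q.domain : Set E₀)) :
    pker (nodeLap Q P) ≤ pker P ⊓ (pran Q)ᗮ := by
  intro x hx
  obtain ⟨p, q, hxp, hxq, hinner⟩ := exists_inner_nodeLap_eq hPd hQd ((mem_pker_iff _ x).1 hx)
  have hsum : ‖p‖ ^ 2 + ‖q‖ ^ 2 = 0 := by
    rw [inner_zero_right] at hinner
    exact_mod_cast hinner.symm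
  obtain ⟨rfl, rfl⟩ : p = 0 ∧ q = 0 := by
    simpa using (add_eq_zero_iff_of_nonneg (sq_nonneg ‖p‖) (sq_nonneg ‖q‖)).1 hsum
  rw [← pker_adjoint hQd]
  exact ⟨(mem_pker_iff P x).2 hxp, (mem_pker_iff _ x).2 hxq⟩

theorem pran_le_pran_nodeLap (hQd : Dense (Q.domain : Set E₀)) (hQ : Q.IsClosed)
    (hQP : pran Q ≤ pker P) (hQran : IsClosed (pran Q : Set E₁)) :
    pran Q ≤ pran (nodeLap Q P) := by
  intro c hc
  obtain ⟨w, hw, u, hwu, huc⟩ := exists_self_comp_adjoint_eq hQd hQ hQran hc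
  exact mem_pran_of_mem_graph ((mem_graph_nodeLap_iff Q P w c).2
    ⟨0, 0, u, c, (mem_pker_iff P w).1 (hQP hw), P.adjoint.graph.zero_mem, hwu, huc, zero_add c⟩)

variable [CompleteSpace E₂]

theorem orthogonal_pker_le_pran_nodeLap (hPd : Dense (P.domain : Set E₁))
    (hQd : Dense (Q.domain : Set E₀)) (hP : P.IsClosed) (hQP : pran Q ≤ pker P)
    (hPran : IsClosed (pran P : Set E₂)) : (pker P)ᗮ ≤ pran (nodeLap Q P) := by
  intro b hb
  obtain ⟨v, hv, p, hvp, hpb⟩ := exists_adjoint_comp_self_eq hPd hP hPran hb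
  have hvQ : v ∈ pker Q.adjoint := pker_adjoint hQd ▸ orthogonal_le hQP hv
  exact mem_pran_of_mem_graph ((mem_graph_nodeLap_iff Q P v b).2
    ⟨p, b, 0, 0, hvp, hpb, (mem_pker_iff _ v).1 hvQ, Q.graph.zero_mem, add_zero b⟩)

theorem orthogonal_harmonic_le_pran_nodeLap (hPd : Dense (P.domain : Set E₁))
    (hQd : Dense (Q.domain : Set E₀)) (hP : P.IsClosed) (hQ : Q.IsClosed)
    (hQP : pran Q ≤ pker P) (hPran : IsClosed (pran P : Set E₂))
    (hQran : IsClosed (pran Q : Set E₁)) : (pker P ⊓ (pran Q)ᗮ)ᗮ ≤ pran (nodeLap Q P) := by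
  have : CompleteSpace (pker P) := (isClosed_pker hP).completeSpace_coe
  have : CompleteSpace (pran Q) := hQran.completeSpace_coe
  rw [orthogonal_inf_orthogonal_of_le hQP]
  exact sup_le (orthogonal_pker_le_pran_nodeLap hPd hQd hP hQP hPran)
    (pran_le_pran_nodeLap hQd hQ hQP hQran)

theorem isFredholmOperator_nodeLap (hPd : Dense (P.domain : Set E₁))
    (hQd : Dense (Q.domain : Set E₀)) (hP : P.IsClosed) (hQ : Q.IsClosed)
    (hQP : pran Q ≤ pker P) (hPran : IsClosed (pran P : Set E₂))
    (hfin : ((pran Q).comap (pker P).subtype).CoFG) : IsFredholmOperator (nodeLap Q P) := by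
  have hQran : IsClosed (pran Q : Set E₁) :=
    isClosed_pran_of_cofg_comap hQ (isClosed_pker hP) hQP hfin
  have hfg : (pker P ⊓ (pran Q)ᗮ).FG :=
    fg_inf_of_disjoint_of_cofg_comap (pran Q).orthogonal_disjoint hfin
  have : FiniteDimensional ℂ ↥(pker P ⊓ (pran Q)ᗮ) := .of_fg hfg
  have hcofg : (pker P ⊓ (pran Q)ᗮ)ᗮ.CoFG := hfg.cofg_of_isCompl (isCompl_orthogonal _)
  have hle := orthogonal_harmonic_le_pran_nodeLap hPd hQd hP hQ hQP hPran hQran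
  exact ⟨finiteDimensional_of_le (pker_nodeLap_le hPd hQd),
    isClosed_mono_of_finiteDimensional_quotient (isClosed_orthogonal _) hle, hcofg.of_le hle⟩

end Node

section Complex

variable {G : ℕ → Type} [∀ k, NormedAddCommGroup (G k)] [∀ k, InnerProductSpace ℂ (G k)]

/-- The operator `P_{k−1}` into `H_k`. Since `0 - 1 = 0` in `ℕ`, the operator `P_{−1} = 0` is
realised on `H_0`, in agreement with `lapAt`. -/
def prevOp (P : ∀ k, G k →ₗ.[ℂ] G (k + 1)) : ∀ k, G (k - 1) →ₗ.[ℂ] G k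
  | 0 => (0 : G 0 →ₗ.[ℂ] G 0)
  | (k + 1) => P k

theorem prevRange_eq_pran (P : ∀ k, G k →ₗ.[ℂ] G (k + 1)) (k : ℕ) :
    prevRange P k = pran (prevOp P k) := by
  cases k with
  | zero => exact pran_zero.symm
  | succ k => rfl

theorem dense_domain_prevOp {P : ∀ k, G k →ₗ.[ℂ] G (k + 1)} {k : ℕ}
    (h : ∀ j, j + 1 = k → Dense ((P j).domain : Set (G j))) :
    Dense ((prevOp P k).domain : Set (G (k - 1))) := by
  cases k with
  | zero => exact dense_univ
  | succ k => exact h k rfl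

theorem isClosed_prevOp {P : ∀ k, G k →ₗ.[ℂ] G (k + 1)} {k : ℕ}
    (h : ∀ j, j + 1 = k → (P j).IsClosed) : (prevOp P k).IsClosed := by
  cases k with
  | zero => exact isClosed_linearPMap_zero
  | succ k => exact h k rfl

theorem pran_prevOp_le_pker {P : ∀ k, G k →ₗ.[ℂ] G (k + 1)} {k : ℕ}
    (h : ∀ j, j + 1 = k → pran (P j) ≤ pker (P (j + 1))) : pran (prevOp P k) ≤ pker (P k) := by
  cases k with
  | zero => exact pran_zero.trans_le bot_le
  | succ k => exact h k rfl

theorem lapAt_eq_nodeLap (P : ∀ k, H k →ₗ.[ℂ] H (k + 1)) (k : ℕ) :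
    lapAt P k = nodeLap (prevOp P k) (P k) := by
  cases k <;> rfl

theorem fredholm_complex_iff_laplacians_fredholm_general
    (n : ℕ) (P : ∀ k, H k →ₗ.[ℂ] H (k + 1))
    (hdense : ∀ k ≤ n, Dense ((P k).domain : Set (H k)))
    (hclosed : ∀ k ≤ n, (P k).IsClosed)
    (hcomplex : ∀ k < n, pran (P k) ≤ pker (P (k + 1)))
    (hran : IsClosed (pran (P n) : Set (H (n + 1)))) :
    (∀ k ≤ n, FiniteDimensional ℂ
        (↥(pker (P k)) ⧸ (prevRange P k).comap (pker (P k)).subtype)) ↔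
      ∀ k ≤ n, IsFredholmOperator (lapAt P k) := by
  have hprev_dense (k) (hk : k ≤ n) : Dense ((prevOp P k).domain : Set (H (k - 1))) :=
    dense_domain_prevOp fun j hj => hdense j (by lia)
  have hprev_closed (k) (hk : k ≤ n) : (prevOp P k).IsClosed :=
    isClosed_prevOp fun j hj => hclosed j (by lia)
  have hprev_le (k) (hk : k ≤ n) : pran (prevOp P k) ≤ pker (P k) :=
    pran_prevOp_le_pker fun j hj => hcomplex j (by lia)
  constructor
  · intro hfin k hk
    have hPran : IsClosed (pran (P k) : Set (H (k + 1))) := by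
      rcases hk.eq_or_lt with rfl | hlt
      · exact hran
      · exact isClosed_pran_of_cofg_comap (hclosed k hk) (isClosed_pker (hclosed (k + 1) hlt))
          (hcomplex k hlt) (hfin (k + 1) hlt)
    rw [lapAt_eq_nodeLap]
    exact isFredholmOperator_nodeLap (hdense k hk) (hprev_dense k hk) (hclosed k hk)
      (hprev_closed k hk) (hprev_le k hk) hPran (prevRange_eq_pran P k ▸ hfin k hk)
  · intro hlap k hk
    rw [prevRange_eq_pran]
    exact cofg_cohomology_of_cofg_pran_nodeLap (hdense k hk) (hprev_le k hk)
      (lapAt_eq_nodeLap P k ▸ (hlap k hk).2.2)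

end Complex

/-- a Hilbert complex `(H, P)` of length `n` is Fredholm (all cohomology spaces
`H^k = ker(P_k)/ran(P_{k−1})` are finite dimensional) if and only if for every `k` the
Laplace-type operator `Δ_k` is a Fredholm operator, i.e. its kernel is finite dimensional and
its range is closed and of finite codimension in `H_k`. -/
theorem fredholm_complex_iff_laplacians_fredholm
    (n : ℕ) (P : ∀ k, H k →ₗ.[ℂ] H (k + 1))
    (hdense : ∀ k, Dense ((P k).domain : Set (H k)))
    (hclosed : ∀ k, (P k).IsClosed)
    (hsub : ∀ k, ∀ x : (P k).domain, ((P k) x) ∈ (P (k + 1)).domain)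
    (hcomp : ∀ k, ∀ x : (P k).domain, P (k + 1) ⟨P k x, hsub k x⟩ = 0)
    (htop : ∀ k, n ≤ k → P k = 0) :
    (∀ k ≤ n, FiniteDimensional ℂ
        (↥(pker (P k)) ⧸ (prevRange P k).comap (pker (P k)).subtype)) ↔
      (∀ k ≤ n,
        FiniteDimensional ℂ (pker (lapAt P k)) ∧
        IsClosed ((pran (lapAt P k) : Set (H k))) ∧
        FiniteDimensional ℂ (H k ⧸ pran (lapAt P k))) := by
  exact fredholm_complex_iff_laplacians_fredholm_general n P (fun k _ => hdense k)
    (fun k _ => hclosed k) (fun k _ => pran_le_pker_of_comp_eq_zero (hsub k) (hcomp k))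
    (by rw [htop n le_rfl, pran_zero]; exact isClosed_singleton)
end
end
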